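/- Let p be a selective ultrafilter on ω. Then every nonprincipal element u of 𝓖^p generates a free subsemigroup: for all n, m ≥ 1, u^n = u^m implies n = m. In particular, no element of 𝓖^p is an idempotent ultrafilter. -/

import Mathlib

/-!
The core is a uniqueness theorem for limits along a selective ultrafilter `p`: if
`w = p-lim aₙ = p-lim bₙ` and `aₙ ≠ w ≠ bₙ` for `p`-almost all `n`, then `aₙ = bₙ` for `p`-almost
all `n`. Selectivity makes the `aₙ` discrete, so `w`-almost everywhere the index `n` can be read off
by a function `d`, and similarly by `e` for the `bₙ`; both map `w` to `p`. The limit of the images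
`e(aₙ)` is `p` again, so either `p`-almost all of them equal `p`, which forces `d < e`, or they are
discrete too, and Katětov's theorem (a map sending an ultrafilter to itself is the identity almost
everywhere) forces `d = e`. By symmetry `d = e`, and then `aₙ` and `bₙ` agree almost everywhere.

Suppose now that `v + u = u` with `u, v ∈ 𝓖^p`. Writing `v` as an iterated `p`-limit, either `v = 0`
or `u` is a `p`-limit of translates `yₙ + u ≠ u` with `yₙ ∈ 𝓖^p`. In the second case each element of
`𝓖^p + u` is also such a limit, and uniqueness shows that it is not in `𝓖^p`, by induction on how
elements of `𝓖^p` are generated; yet `u` itself is in both. Hence `v = 0`, and `uⁿ = uᵐ` with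
`n < m` would give `u^(m-n) = 0`.
-/

open Filter

attribute [local instance] Ultrafilter.add Ultrafilter.addSemigroup

/-- `sumPow u n` is the `n`-fold sum `u + ⋯ + u` of the ultrafilter `u`, for `n ≥ 1`
(with junk value `u` at `n = 0`). -/
def sumPow (u : Ultrafilter ℕ) : ℕ → Ultrafilter ℕ
  | 0 => u
  | 1 => u
  | n + 2 => sumPow u (n + 1) + u

/-- The `u`-limit of a sequence of ultrafilters: `A ∈ ulim u v ↔ {n | A ∈ v n} ∈ u`. -/
def ulim {α : Type*} (u : Ultrafilter ℕ) (v : ℕ → Ultrafilter α) : Ultrafilter α := u.bind v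

/-- `InG p` is the smallest family of ultrafilters on `ℕ` containing all principal ultrafilters
and closed under `p`-limits. -/
inductive InG (p : Ultrafilter ℕ) : Ultrafilter ℕ → Prop
  | principal (n : ℕ) : InG p (pure n)
  | lim (v : ℕ → Ultrafilter ℕ) : (∀ n, InG p (v n)) → InG p (ulim p v)

/-- A selective ultrafilter: nonprincipal, and every `f : ℕ → ℕ` is constant or injective on
some set of the ultrafilter. -/
def IsSelective (p : Ultrafilter ℕ) : Prop :=
  (∀ n : ℕ, p ≠ pure n) ∧
    ∀ f : ℕ → ℕ, ∃ A ∈ p, (∃ c, ∀ a ∈ A, f a = c) ∨ Set.InjOn f A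

theorem exists_bool_coloring_of_wellFounded {α : Type*} {r : α → α → Prop} (hr : WellFounded r)
    (f : α → α) : ∃ c : α → Bool, ∀ x, r (f x) x → c (f x) ≠ c x := by
  classical
  refine ⟨hr.fix fun x ih => if h : r (f x) x then !(ih (f x) h) else true, fun x hx => ?_⟩
  rw [hr.fix_eq _ x, dif_pos hx]
  exact (Bool.not_ne_self _).symm

-- Compactness: `<` is well-founded on finite sets; take an ultrafilter limit of colorings of those.
theorem exists_bool_coloring_of_lt {α : Type*} [Preorder α] (f : α → α) :
    ∃ c : α → Bool, ∀ x, f x < x → c (f x) ≠ c x := by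
  have coloring_on (F : Finset α) :
      ∃ c : α → Bool, ∀ x, f x < x ∧ f x ∈ F ∧ x ∈ F → c (f x) ≠ c x :=
    exists_bool_coloring_of_wellFounded
      (Set.wellFoundedOn_iff.1 (F.finite_toSet.wellFoundedOn (r := (· < ·)))) f
  choose c hc using coloring_on
  let 𝒰 : Ultrafilter (Finset α) := Ultrafilter.of atTop
  have eventually_mem (x : α) : ∀ᶠ F in (𝒰 : Filter (Finset α)), x ∈ F :=
    Ultrafilter.of_le atTop <| (eventually_ge_atTop {x}).mono fun _ => Finset.singleton_subset_iff.1
  have limit_color (x : α) : ∃ b, ∀ᶠ F in (𝒰 : Filter (Finset α)), c F x = b :=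
    Ultrafilter.eventually_exists_iff.1 (.of_forall fun F => ⟨c F x, rfl⟩)
  choose b hb using limit_color
  refine ⟨b, fun x hx => ?_⟩
  obtain ⟨F, hF, hfF, hbF, hbfF⟩ :=
    ((eventually_mem x).and ((eventually_mem (f x)).and ((hb x).and (hb (f x))))).exists
  exact hbF ▸ hbfF ▸ hc F x ⟨hx, hfF, hF⟩

theorem not_eventually_color_ne {α κ : Type*} [Finite κ] {p : Ultrafilter α} {f : α → α}
    (hf : p.map f = p) (c : α → κ) : ¬ ∀ᶠ x in (p : Filter α), c (f x) ≠ c x := by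
  intro hne
  obtain ⟨b, hb⟩ : ∃ b, ∀ᶠ x in (p : Filter α), c x = b :=
    Ultrafilter.eventually_exists_iff.1 (.of_forall fun x => ⟨c x, rfl⟩)
  have hbf : ∀ᶠ x in (p.map f : Filter α), c x = b := hf.symm ▸ hb
  obtain ⟨x, hx, hxb, hfxb⟩ := (hne.and (hb.and (eventually_map.1 hbf))).exists
  exact hx (hfxb.trans hxb.symm)

theorem eventuallyEq_id_of_map_eq {α : Type*} {p : Ultrafilter α} {f : α → α}
    (hf : p.map f = p) : f =ᶠ[p] id := by
  obtain ⟨_, -⟩ := exists_wellFoundedLT (α := α)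
  obtain ⟨c, hc⟩ := exists_bool_coloring_of_lt f
  obtain ⟨c', hc'⟩ := exists_bool_coloring_of_lt (α := αᵒᵈ) f
  by_contra hne
  have hlt_or_gt : ∀ᶠ x in (p : Filter α), f x < x ∨ x < f x :=
    (Ultrafilter.eventually_not.2 hne).mono fun _ => lt_or_gt_of_ne
  rcases Ultrafilter.eventually_or.1 hlt_or_gt with hlt | hgt
  · exact not_eventually_color_ne hf c (hlt.mono hc)
  · exact not_eventually_color_ne hf c' (hgt.mono hc')

theorem eq_pure_iff_eventually_eq {α : Type*} {u : Ultrafilter α} {x : α} :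
    u = pure x ↔ ∀ᶠ y in (u : Filter α), y = x := by
  rw [← Ultrafilter.coe_inj, Ultrafilter.coe_pure, u.neBot.eq_pure_iff]
  rfl

theorem exists_mem_notMem_of_ne {α : Type*} {u v : Ultrafilter α} (h : u ≠ v) :
    ∃ s ∈ u, s ∉ v :=
  Filter.not_le.1 fun hle => h (Ultrafilter.coe_le_coe.1 hle).symm

theorem exists_pairwise_disjoint_of_ne {α : Type*} (w : Ultrafilter α) (a : ℕ → Ultrafilter α) :
    ∃ D : ℕ → Set α, Pairwise (Function.onFun Disjoint D) ∧ (∀ j, D j ∉ w) ∧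
      ∀ n, a n ≠ w → ∃ j, D j ∈ a n := by
  have separating_set (n : ℕ) : ∃ s : Set α, s ∉ w ∧ (a n ≠ w → s ∈ a n) := by
    by_cases hn : a n = w
    · exact ⟨∅, w.empty_notMem, fun h => (h hn).elim⟩
    · obtain ⟨s, hs, hsw⟩ := exists_mem_notMem_of_ne hn
      exact ⟨s, hsw, fun _ => hs⟩
  choose s hsw hsa using separating_set
  refine ⟨disjointed s, disjoint_disjointed s,
    fun j hj => hsw j (mem_of_superset hj (disjointed_subset s j)), fun n hn => ?_⟩
  have hunion : ⋃ j ∈ Finset.Iic n, disjointed s j ∈ a n := by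
    rw [biUnion_Iic_disjointed]
    exact mem_of_superset (hsa n hn) (le_partialSups s n)
  obtain ⟨j, -, hj⟩ := (Ultrafilter.finite_biUnion_mem_iff (Finset.Iic n).finite_toSet).1 hunion
  exact ⟨j, hj⟩

section Limits

variable {α β : Type*} {p : Ultrafilter ℕ} {a b : ℕ → Ultrafilter α}

theorem eventually_ulim {P : α → Prop} :
    (∀ᶠ x in (ulim p a : Filter α), P x) ↔
      ∀ᶠ n in (p : Filter ℕ), ∀ᶠ x in (a n : Filter α), P x :=
  Iff.rfl

theorem map_ulim (f : α → β) : (ulim p a).map f = ulim p fun n => (a n).map f :=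
  rfl

theorem ulim_congr (h : ∀ᶠ n in (p : Filter ℕ), a n = b n) : ulim p a = ulim p b :=
  Ultrafilter.ext fun s => eventually_congr <| h.mono fun _ hn => Ultrafilter.ext_iff.1 hn s

theorem ulim_const (p : Ultrafilter ℕ) (w : Ultrafilter α) : ulim p (fun _ => w) = w :=
  Ultrafilter.ext fun _ => eventually_const

theorem ulim_pure (p : Ultrafilter ℕ) : ulim p pure = p :=
  rfl

/-- `d` recovers the index `n` from almost every point of `a n`, for `p`-almost every `n`. The
existence of such a `d` says that the family `a` is discrete on a set of `p`. -/
def IsIndexMap (p : Ultrafilter ℕ) (a : ℕ → Ultrafilter α) (d : α → ℕ) : Prop :=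
  ∀ᶠ n in (p : Filter ℕ), ∀ᶠ x in (a n : Filter α), d x = n

theorem IsIndexMap.map_ulim_eq {d : α → ℕ} (hd : IsIndexMap p a d) : (ulim p a).map d = p :=
  have hpure : ∀ᶠ n in (p : Filter ℕ), (a n).map d = pure n :=
    hd.mono fun _ hn => eq_pure_iff_eventually_eq.2 hn
  calc (ulim p a).map d = ulim p fun n => (a n).map d := map_ulim d
    _ = ulim p pure := ulim_congr hpure
    _ = p := ulim_pure p

theorem IsIndexMap.congr {d e : α → ℕ} (hd : IsIndexMap p a d) (hde : d =ᶠ[ulim p a] e) :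
    IsIndexMap p a e := by
  filter_upwards [hd, eventually_ulim.1 hde] with n hn hden
  filter_upwards [hn, hden] with x hx hdex using hdex ▸ hx

theorem IsIndexMap.eventually_eq {d : α → ℕ} (ha : IsIndexMap p a d) (hb : IsIndexMap p b d)
    (h : ulim p a = ulim p b) : ∀ᶠ n in (p : Filter ℕ), a n = b n := by
  have choose_set (n : ℕ) : ∃ s : Set α, a n ≠ b n → s ∈ a n ∧ s ∉ b n := by
    by_cases hn : a n = b n
    · exact ⟨∅, fun h => (h hn).elim⟩
    · obtain ⟨s, hs⟩ := exists_mem_notMem_of_ne hn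
      exact ⟨s, fun _ => hs⟩
  choose s hs using choose_set
  by_contra hne
  have hne : ∀ᶠ n in (p : Filter ℕ), a n ≠ b n := Ultrafilter.eventually_not.2 hne
  have hmem : ∀ᶠ x in (ulim p a : Filter α), x ∈ s (d x) := by
    rw [eventually_ulim]
    filter_upwards [ha, hne] with n hd hn
    filter_upwards [hd, (hs n hn).1] with x hx hxs using hx.symm ▸ hxs
  have hnotMem : ∀ᶠ x in (ulim p b : Filter α), x ∉ s (d x) := by
    rw [eventually_ulim]
    filter_upwards [hb, hne] with n hd hn
    filter_upwards [hd, Ultrafilter.compl_mem_iff_notMem.2 (hs n hn).2] with x hx hxs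
      using hx.symm ▸ hxs
  obtain ⟨x, hx, hx'⟩ := (hmem.and (h ▸ hnotMem)).exists
  exact hx' hx

end Limits

namespace IsSelective

variable {α : Type*} {p : Ultrafilter ℕ} {a b : ℕ → Ultrafilter α} {d e : α → ℕ}

theorem le_atTop (hp : IsSelective p) : (p : Filter ℕ) ≤ atTop := by
  rw [← Nat.cofinite_eq_atTop]
  exact p.le_cofinite_or_eq_pure.resolve_right fun ⟨n, hn⟩ => hp.1 n hn

theorem exists_isIndexMap (hp : IsSelective p)
    (ha : ∀ᶠ n in (p : Filter ℕ), a n ≠ ulim p a) : ∃ d, IsIndexMap p a d := by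
  obtain ⟨D, hdisj, hDw, hDa⟩ := exists_pairwise_disjoint_of_ne (ulim p a) a
  choose! f hf using hDa
  obtain ⟨A, hA, ⟨c, hc⟩ | hinj⟩ := hp.2 f
  · refine (hDw c (eventually_ulim.2 ?_)).elim
    filter_upwards [ha, hA] with n hn hnA using hc n hnA ▸ hf n hn
  · have index_unique (x : α) : ∃ n, ∀ m ∈ A, x ∈ D (f m) → n = m := by
      by_cases hx : ∃ n ∈ A, x ∈ D (f n)
      · obtain ⟨n, hnA, hxn⟩ := hx
        exact ⟨n, fun m hmA hxm =>
          hinj hnA hmA (hdisj.eq (Set.not_disjoint_iff.2 ⟨x, hxn, hxm⟩))⟩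
      · exact ⟨0, fun m hmA hxm => (hx ⟨m, hmA, hxm⟩).elim⟩
    choose d hd using index_unique
    refine ⟨d, ?_⟩
    filter_upwards [ha, hA] with n hn hnA
    filter_upwards [hf n hn] with x hx using hd x n hnA hx

theorem eventuallyEq_or_eventually_lt (hp : IsSelective p) (hd : IsIndexMap p a d)
    (he : (ulim p a).map e = p) :
    d =ᶠ[ulim p a] e ∨ ∀ᶠ x in (ulim p a : Filter α), d x < e x := by
  have hlim : ulim p (fun n => (a n).map e) = p := (map_ulim e).symm.trans he
  rcases Ultrafilter.em p fun n => (a n).map e = p with heq | hne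
  · right
    rw [eventually_ulim]
    filter_upwards [heq, hd] with n hn hdn
    have hlt : ∀ᶠ x in (a n : Filter α), n < e x := by
      rw [← eventually_map (P := (n < ·)), ← Ultrafilter.coe_map, hn]
      exact hp.le_atTop (eventually_gt_atTop n)
    filter_upwards [hdn, hlt] with x hdx hx using hdx ▸ hx
  · left
    obtain ⟨c, hc⟩ := hp.exists_isIndexMap (a := fun n => (a n).map e) (by rwa [hlim])
    have hid : c =ᶠ[ulim p fun n => (a n).map e] id :=
      eventuallyEq_id_of_map_eq (hc.map_ulim_eq.trans hlim.symm)
    rw [EventuallyEq, eventually_ulim]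
    filter_upwards [hd, hc.congr hid] with n hdn hen
    filter_upwards [hdn, eventually_map.1 hen] with x hdx hex using hdx.trans hex.symm

theorem isIndexMap_eventuallyEq (hp : IsSelective p) (hd : IsIndexMap p a d)
    (he : IsIndexMap p b e) (h : ulim p a = ulim p b) : d =ᶠ[ulim p a] e := by
  rcases hp.eventuallyEq_or_eventually_lt hd (h ▸ he.map_ulim_eq) with heq | hlt
  · exact heq
  rcases hp.eventuallyEq_or_eventually_lt he (h ▸ hd.map_ulim_eq) with heq | hgt
  · exact h ▸ heq.symm
  · obtain ⟨x, hx, hx'⟩ := (hlt.and (h ▸ hgt)).exists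
    exact (lt_asymm hx hx').elim

theorem eventually_eq_of_ulim_eq (hp : IsSelective p) (h : ulim p a = ulim p b)
    (ha : ∀ᶠ n in (p : Filter ℕ), a n ≠ ulim p a)
    (hb : ∀ᶠ n in (p : Filter ℕ), b n ≠ ulim p b) : ∀ᶠ n in (p : Filter ℕ), a n = b n := by
  obtain ⟨d, hd⟩ := hp.exists_isIndexMap ha
  obtain ⟨e, he⟩ := hp.exists_isIndexMap hb
  exact (hd.congr (hp.isIndexMap_eventuallyEq hd he h)).eventually_eq he h

end IsSelective

theorem pure_add_eq_map {M : Type*} [Add M] (k : M) (u : Ultrafilter M) :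
    pure k + u = u.map (k + ·) :=
  rfl

theorem ulim_add {M : Type*} [Add M] (p : Ultrafilter ℕ) (v : ℕ → Ultrafilter M)
    (u : Ultrafilter M) : ulim p v + u = ulim p fun n => v n + u :=
  rfl

theorem ultrafilter_map_injective {α β : Type*} {f : α → β} (hf : Function.Injective f) :
    Function.Injective (Ultrafilter.map f) := fun _ _ h =>
  Ultrafilter.coe_injective (Filter.map_injective hf (congrArg Ultrafilter.toFilter h))

theorem eq_zero_of_pure_add_eq {k : ℕ} {u : Ultrafilter ℕ} (h : pure k + u = u) : k = 0 := by
  obtain ⟨n, hn⟩ := (eventuallyEq_id_of_map_eq (pure_add_eq_map k u ▸ h)).exists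
  exact Nat.add_eq_right.1 hn

theorem eq_pure_zero_of_add_eq_pure_zero {u v : Ultrafilter ℕ} (h : v + u = pure 0) :
    u = pure 0 := by
  obtain ⟨n, hn⟩ :=
    ((Ultrafilter.eventually_add v u _).1 (eq_pure_iff_eventually_eq.1 h)).exists
  exact eq_pure_iff_eventually_eq.2 (hn.mono fun m hm => (Nat.add_eq_zero_iff.1 hm).2)

namespace InG

variable {p u v : Ultrafilter ℕ}

theorem map (hu : InG p u) (f : ℕ → ℕ) : InG p (u.map f) := by
  induction hu with
  | principal n => exact Ultrafilter.map_pure f n ▸ principal (f n)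
  | lim v _ ih => exact map_ulim f ▸ lim _ ih

theorem add (hv : InG p v) (hu : InG p u) : InG p (v + u) := by
  induction hv with
  | principal k => exact hu.map (k + ·)
  | lim v _ ih => exact ulim_add p v u ▸ lim _ ih

end InG

/-- `w` is a nontrivial `p`-limit of translates of `u` by elements of `𝓖^p`: almost all of the
translates differ from `w`. -/
def IsTranslateLimit (p u w : Ultrafilter ℕ) : Prop :=
  ∃ y : ℕ → Ultrafilter ℕ, (∀ n, InG p (y n)) ∧ ulim p (fun n => y n + u) = w ∧
    ∀ᶠ n in (p : Filter ℕ), y n + u ≠ w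

namespace IsTranslateLimit

variable {p u v w : Ultrafilter ℕ}

theorem ne_pure (h : IsTranslateLimit p u w) (k : ℕ) : w ≠ pure k := by
  rintro rfl
  obtain ⟨y, -, hlim, hne⟩ := h
  have heq := eventually_ulim.1 (eq_pure_iff_eventually_eq.1 hlim)
  obtain ⟨n, hn, hn'⟩ := (hne.and heq).exists
  exact hn (eq_pure_iff_eventually_eq.2 hn')

theorem add (hu : IsTranslateLimit p u u) (hv : InG p v) : IsTranslateLimit p u (v + u) := by
  induction hv with
  | principal k =>
    obtain ⟨y, hy, hlim, hne⟩ := hu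
    refine ⟨fun n => pure k + y n, fun n => (InG.principal k).add (hy n), ?_, ?_⟩
    · calc
        ulim p (fun n => pure k + y n + u) = ulim p fun n => pure k + (y n + u) := by
          simp only [add_assoc]
        _ = pure k + ulim p fun n => y n + u := by simp only [pure_add_eq_map, map_ulim]
        _ = pure k + u := by rw [hlim]
    · filter_upwards [hne] with n hn h
      rw [add_assoc] at h
      exact hn (ultrafilter_map_injective (add_right_injective k) h)
  | lim y hy ih =>
    rcases Ultrafilter.em p fun n => y n + u = ulim p y + u with heq | hne
    · obtain ⟨n, hn⟩ := heq.exists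
      exact hn ▸ ih n
    · exact ⟨y, hy, (ulim_add p y u).symm, hne⟩

theorem not_inG (hp : IsSelective p) (hu : IsTranslateLimit p u u)
    (hw : IsTranslateLimit p u w) : ¬ InG p w := by
  intro hG
  induction hG with
  | principal k => exact hw.ne_pure k rfl
  | lim x _ ih =>
    rcases Ultrafilter.em p fun n => x n = ulim p x with heq | hne
    · obtain ⟨n, hn⟩ := heq.exists
      exact ih n (hn.symm ▸ hw)
    · obtain ⟨y, hy, hlim, hyne⟩ := hw
      obtain ⟨n, hn⟩ := (hp.eventually_eq_of_ulim_eq hlim.symm hne (hlim.symm ▸ hyne)).exists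
      exact ih n (hn.symm ▸ hu.add (hy n))

end IsTranslateLimit

namespace InG

variable {p u v : Ultrafilter ℕ}

theorem not_isTranslateLimit_self (hp : IsSelective p) (hu : InG p u) :
    ¬ IsTranslateLimit p u u :=
  fun h => h.not_inG hp h hu

theorem eq_pure_zero_of_add_eq (hp : IsSelective p) (hu : InG p u) (hv : InG p v)
    (h : v + u = u) : v = pure 0 := by
  induction hv with
  | principal k => rw [eq_zero_of_pure_add_eq h]
  | lim y hy ih =>
    rcases Ultrafilter.em p fun n => y n + u = u with heq | hne
    · calc ulim p y = ulim p fun _ => pure 0 := ulim_congr (heq.mono ih)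
        _ = pure 0 := ulim_const p _
    · exact (hu.not_isTranslateLimit_self hp ⟨y, hy, h, hne⟩).elim

end InG

theorem sumPow_succ (u : Ultrafilter ℕ) {n : ℕ} (hn : 1 ≤ n) :
    sumPow u (n + 1) = sumPow u n + u := by
  obtain ⟨n, rfl⟩ := Nat.exists_eq_add_of_le' hn
  rfl

theorem sumPow_add (u : Ultrafilter ℕ) {m n : ℕ} (hm : 1 ≤ m) (hn : 1 ≤ n) :
    sumPow u (m + n) = sumPow u m + sumPow u n := by
  induction n, hn using Nat.le_induction with
  | base => exact sumPow_succ u hm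
  | succ n hn ih =>
    rw [← add_assoc m, sumPow_succ u (by omega), ih, sumPow_succ u hn, add_assoc]

theorem sumPow_ne_pure_zero {u : Ultrafilter ℕ} (hu : u ≠ pure 0) (n : ℕ) :
    sumPow u n ≠ pure 0 :=
  match n with
  | 0 | 1 => hu
  | _ + 2 => fun h => hu (eq_pure_zero_of_add_eq_pure_zero h)

theorem inG_sumPow {p u : Ultrafilter ℕ} (hu : InG p u) : ∀ n, InG p (sumPow u n)
  | 0 | 1 => hu
  | n + 2 => (inG_sumPow hu (n + 1)).add hu

theorem InG.sumPow_injOn {p u : Ultrafilter ℕ} (hp : IsSelective p) (hu : InG p u)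
    (h0 : u ≠ pure 0) : Set.InjOn (sumPow u) (Set.Ici 1) := by
  have ne_of_lt {n m : ℕ} (hn : 1 ≤ n) (hnm : n < m) : sumPow u n ≠ sumPow u m := by
    obtain ⟨k, hk, rfl⟩ : ∃ k, 1 ≤ k ∧ m = k + n := ⟨m - n, by omega, by omega⟩
    rw [sumPow_add u hk hn]
    exact fun h => sumPow_ne_pure_zero h0 k <|
      (inG_sumPow hu n).eq_pure_zero_of_add_eq hp (inG_sumPow hu k) h.symm
  intro n hn m hm h
  rcases lt_trichotomy n m with hlt | heq | hgt
  · exact (ne_of_lt hn hlt h).elim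
  · exact heq
  · exact (ne_of_lt hm hgt h.symm).elim

/-- If `p` is selective, every nonprincipal element `u` of `𝓖^p` generates a free subsemigroup
(`u^n = u^m → n = m` for `n, m ≥ 1`); in particular no element of `𝓖^p` is an idempotent
ultrafilter. -/
theorem statement18 (p : Ultrafilter ℕ) (hp : IsSelective p) :
    (∀ u : Ultrafilter ℕ, InG p u → (∀ k : ℕ, u ≠ pure k) →
      ∀ n m : ℕ, 1 ≤ n → 1 ≤ m → sumPow u n = sumPow u m → n = m) ∧
    ∀ u : Ultrafilter ℕ, InG p u → (∀ k : ℕ, u ≠ pure k) → u + u ≠ u := by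
  exact ⟨fun u hu hn _ _ h1 h2 h => hu.sumPow_injOn hp (hn 0) h1 h2 h,
    fun u hu hn h => hn 0 (hu.eq_pure_zero_of_add_eq hp hu h)⟩
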